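/- Let (𝒴, σ(𝒴)) be a measurable space, 𝒮(𝒴) ⊆ σ(𝒴), 𝒳 a set, and ℋ ⊆ 𝒴^𝒳 nonempty. Fix γ ∈ (0,1] and suppose d ∈ ℕ is such that ℋ does not γ-shatter any measure tree of depth d+1. Then there exists a randomized online learner 𝒜 such that for every T ∈ ℕ and every stream (x_1,S_1),…,(x_T,S_T) ∈ (𝒳 × 𝒮(𝒴))^T that is realizable by ℋ: (i) the number of rounds t with μ̂_t(𝒴 \ S_t) ≥ γ is at most d, and consequently (ii) the expected cumulative loss satisfies Σ_{t=1}^T μ̂_t(𝒴 \ S_t) ≤ d + γT. -/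

import Mathlib

/-!
The learner is a randomized Standard Optimal Algorithm. Shattering is rephrased as a game on
version spaces (`RecShatter`), which unfolds into a measure tree (`RecShatter.msShatter`), so `H`
is not shattered to depth `d + 1` in that sense either. The rank of a version space is the least
depth to which it is not shattered. By minimality of the rank, for each instance there is a
measure such that every feedback set of loss at least `γ` strictly lowers the rank
(`exists_good_measure`); the learner predicts it. Ranks never increase, start at most at `d + 1`,
and stay positive on a realizable stream, so at most `d` rounds have loss `≥ γ`. Those rounds cost
at most `1` each and the others at most `γ`.
-/


open MeasureTheory

/-- Restriction of a path of length `d` to its strict prefix before position `t`. -/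
def pref {M : Type*} {d : ℕ} (y : Fin d → M) (t : Fin d) : Fin (t : ℕ) → M :=
  fun i => y ⟨(i : ℕ), i.isLt.trans t.isLt⟩

/-- Restriction of a path of length `d` to its prefix up to and including position `t`. -/
def prefS {M : Type*} {d : ℕ} (y : Fin d → M) (t : Fin d) : Fin ((t : ℕ) + 1) → M :=
  fun i => y ⟨(i : ℕ), lt_of_le_of_lt (Nat.lt_succ_iff.mp i.isLt) t.isLt⟩

/-- `ℋ` shatters a Set Littlestone tree of depth `d` (with feedback sets from `𝒮`):
there are node labels `node t : 𝒴^t → 𝒳` and edge labels `edge t : 𝒴^{t+1} → 𝒮` such that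
for every path `y ∈ 𝒴^d`, (a) `y t ∉ edge t (y_{≤ t})` for all `t`, and (b) some `h ∈ ℋ`
satisfies `h (node t (y_{< t})) ∈ edge t (y_{≤ t})` for all `t`. -/
def SLShatter {X Y : Type*} (𝒮 : Set (Set Y)) (H : Set (X → Y)) (d : ℕ) : Prop :=
  ∃ (node : ∀ t : Fin d, (Fin (t : ℕ) → Y) → X)
    (edge : ∀ t : Fin d, (Fin ((t : ℕ) + 1) → Y) → Set Y),
    (∀ (t : Fin d) (ys : Fin ((t : ℕ) + 1) → Y), edge t ys ∈ 𝒮) ∧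
    ∀ y : Fin d → Y,
      (∀ t : Fin d, y t ∉ edge t (prefS y t)) ∧
      ∃ h ∈ H, ∀ t : Fin d, h (node t (pref y t)) ∈ edge t (prefS y t)

/-- `ℋ` `γ`-shatters a measure tree of depth `d`: nodes are labeled along paths of
probability measures, and for every path `μ ∈ Π(𝒴)^d`, (a) `μ t (edge t (μ_{≤t})) ≤ 1 - γ`
(strict inequality `< 1` when `γ = 0`), and (b) some `h ∈ ℋ` is consistent with the edges
along the path. -/
def MSShatter {X Y : Type*} [MeasurableSpace Y] (𝒮 : Set (Set Y)) (H : Set (X → Y))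
    (γ : ℝ) (d : ℕ) : Prop :=
  ∃ (node : ∀ t : Fin d, (Fin (t : ℕ) → ProbabilityMeasure Y) → X)
    (edge : ∀ t : Fin d, (Fin ((t : ℕ) + 1) → ProbabilityMeasure Y) → Set Y),
    (∀ (t : Fin d) (ms : Fin ((t : ℕ) + 1) → ProbabilityMeasure Y), edge t ms ∈ 𝒮) ∧
    ∀ μ : Fin d → ProbabilityMeasure Y,
      (∀ t : Fin d,
        if γ = 0 then (μ t).toMeasure (edge t (prefS μ t)) < 1
        else (μ t).toMeasure (edge t (prefS μ t)) ≤ 1 - ENNReal.ofReal γ) ∧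
      ∃ h ∈ H, ∀ t : Fin d, h (node t (pref μ t)) ∈ edge t (prefS μ t)

/-- `ℋ` shatters a `p`-Set Littlestone tree of depth `d`: paths are sequences in `[p]`,
and for every path `q ∈ [p]^d`, (a) the `p` sets labeling the outgoing edges of each node
along the path have empty intersection, and (b) some `h ∈ ℋ` is consistent with the edges
along the path. -/
def PSLShatter {X Y : Type*} (𝒮 : Set (Set Y)) (H : Set (X → Y)) (p d : ℕ) : Prop :=
  ∃ (node : ∀ t : Fin d, (Fin (t : ℕ) → Fin p) → X)
    (edge : ∀ t : Fin d, (Fin ((t : ℕ) + 1) → Fin p) → Set Y),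
    (∀ (t : Fin d) (qs : Fin ((t : ℕ) + 1) → Fin p), edge t qs ∈ 𝒮) ∧
    ∀ q : Fin d → Fin p,
      (∀ t : Fin d, ⋂ i : Fin p, edge t (Fin.snoc (pref q t) i) = ∅) ∧
      ∃ h ∈ H, ∀ t : Fin d, h (node t (pref q t)) ∈ edge t (prefS q t)

/-- The history (list of labeled examples) presented to an online learner before round `t`,
on the stream given by instances `x` and feedback sets `S`. -/
def hist {X Y : Type*} (x : ℕ → X) (S : ℕ → Set Y) (t : ℕ) : List (X × Set Y) :=
  (List.range t).map fun i => (x i, S i)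

/-- Recursive form of `γ`-shattering for a version space `V`: some instance can be queried such
that every predicted measure `μ` is answered by a feedback set of `μ`-mass at most `1 - γ` whose
consistent hypotheses still shatter to depth `n`. Depth `0` means that `V` is nonempty. -/
def RecShatter {X Y : Type*} [MeasurableSpace Y] (𝒮 : Set (Set Y)) (γ : ℝ) :
    ℕ → Set (X → Y) → Prop
  | 0, V => V.Nonempty
  | n + 1, V => ∃ x : X, ∀ μ : ProbabilityMeasure Y, ∃ s ∈ 𝒮,
      μ.toMeasure s ≤ 1 - ENNReal.ofReal γ ∧ RecShatter 𝒮 γ n {h ∈ V | h x ∈ s}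

lemma RecShatter.mono {X Y : Type*} [MeasurableSpace Y] {𝒮 : Set (Set Y)} {γ : ℝ} {n : ℕ}
    {V W : Set (X → Y)} (hVW : V ⊆ W) (hV : RecShatter 𝒮 γ n V) : RecShatter 𝒮 γ n W := by
  induction n generalizing V W with
  | zero => exact Set.Nonempty.mono hVW hV
  | succ n ih =>
    obtain ⟨x, hx⟩ := hV
    refine ⟨x, fun μ => ?_⟩
    obtain ⟨s, hs, hμ, hr⟩ := hx μ
    exact ⟨s, hs, hμ, ih (fun h hh => ⟨hVW hh.1, hh.2⟩) hr⟩

/-- The recursive game unfolds into a measure tree: the subtree below the root edge labelled by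
`μ` is the tree obtained for the hypotheses consistent with the answer to `μ`. -/
lemma RecShatter.msShatter {X Y : Type*} [MeasurableSpace Y] {𝒮 : Set (Set Y)} {γ : ℝ}
    (hγ : γ ≠ 0) {n : ℕ} {V : Set (X → Y)} (hV : RecShatter 𝒮 γ n V) :
    MSShatter 𝒮 V γ n := by
  induction n generalizing V with
  | zero =>
    obtain ⟨h, hh⟩ := hV
    exact ⟨fun t => t.elim0, fun t => t.elim0, fun t => t.elim0,
      fun _ => ⟨fun t => t.elim0, h, hh, fun t => t.elim0⟩⟩
  | succ n ih =>
    obtain ⟨x, hx⟩ := hV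
    choose s hs hμ hr using hx
    choose node edge hedge hpath using fun μ => ih (hr μ)
    refine ⟨Fin.cases (motive := fun t : Fin (n + 1) =>
          (Fin (t : ℕ) → ProbabilityMeasure Y) → X)
        (fun _ => x)
        (fun k (ms : Fin ((k : ℕ) + 1) → ProbabilityMeasure Y) =>
          node (ms 0) k (Fin.tail ms)),
      Fin.cases (motive := fun t : Fin (n + 1) =>
          (Fin ((t : ℕ) + 1) → ProbabilityMeasure Y) → Set Y)
        (fun ms => s (ms 0)) (fun k ms => edge (ms 0) k (Fin.tail ms)), ?_, ?_⟩
    · intro t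
      refine Fin.cases ?_ (fun k => ?_) t
      · exact fun ms => hs (ms 0)
      · exact fun ms => hedge (ms 0) k (Fin.tail ms)
    · intro μ
      obtain ⟨hm, h, hh, hc⟩ := hpath (μ 0) (Fin.tail μ)
      refine ⟨fun t => ?_, h, hh.1, fun t => ?_⟩
      · refine Fin.cases ?_ (fun k => ?_) t
        · rw [if_neg hγ]
          exact hμ (μ 0)
        · exact hm k
      · refine Fin.cases ?_ (fun k => ?_) t
        · exact hh.2
        · exact hc k

/-- The least depth to which `V` is not shattered, i.e. one more than the dimension of `V`
(junk value `0` when `V` is shattered to every depth). -/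
noncomputable def shatterRank {X Y : Type*} [MeasurableSpace Y] (𝒮 : Set (Set Y)) (γ : ℝ)
    (V : Set (X → Y)) : ℕ :=
  sInf {n | ¬ RecShatter 𝒮 γ n V}

/-- The hypotheses in `H` consistent with a history of labelled examples. -/
def versionSpace {X Y : Type*} (H : Set (X → Y)) (l : List (X × Set Y)) : Set (X → Y) :=
  {h ∈ H | ∀ p ∈ l, h p.1 ∈ p.2}

/-- The prediction rule of the learner: a measure for which every feedback set costing at least
`γ` makes the rank of the version space drop. If no such measure existed, the version space would
be shattered to the depth `shatterRank`. -/
lemma exists_good_measure {X Y : Type*} [MeasurableSpace Y] [Nonempty Y] (𝒮 : Set (Set Y))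
    (γ : ℝ) (V : Set (X → Y)) (x : X) :
    ∃ μ : ProbabilityMeasure Y, V.Nonempty → (∃ n, ¬ RecShatter 𝒮 γ n V) →
      ∀ s ∈ 𝒮, μ.toMeasure s ≤ 1 - ENNReal.ofReal γ →
        (¬ RecShatter 𝒮 γ (shatterRank 𝒮 γ {h ∈ V | h x ∈ s}) {h ∈ V | h x ∈ s}) ∧
        shatterRank 𝒮 γ {h ∈ V | h x ∈ s} + 1 ≤ shatterRank 𝒮 γ V := by
  by_cases hV : V.Nonempty ∧ ∃ n, ¬ RecShatter 𝒮 γ n V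
  · have hmem : ¬ RecShatter 𝒮 γ (shatterRank 𝒮 γ V) V :=
      Nat.sInf_mem (s := {n | ¬ RecShatter 𝒮 γ n V}) hV.2
    generalize shatterRank 𝒮 γ V = r at hmem
    cases r with
    | zero => exact absurd hV.1 hmem
    | succ n =>
      simp only [RecShatter, not_exists, not_forall, not_and] at hmem
      obtain ⟨μ, hμ⟩ := hmem x
      refine ⟨μ, fun _ _ s hs hle => ?_⟩
      have hn := hμ s hs hle
      exact ⟨Nat.sInf_mem (s := {n | ¬ RecShatter 𝒮 γ n _}) ⟨n, hn⟩,
        Nat.succ_le_succ (Nat.sInf_le hn)⟩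
  · obtain ⟨y⟩ := ‹Nonempty Y›
    exact ⟨⟨Measure.dirac y, inferInstance⟩, fun h1 h2 => absurd ⟨h1, h2⟩ hV⟩

lemma versionSpace_hist_succ {X Y : Type*} (H : Set (X → Y)) (x : ℕ → X) (S : ℕ → Set Y)
    (t : ℕ) : versionSpace H (hist x S (t + 1)) =
      {h ∈ versionSpace H (hist x S t) | h (x t) ∈ S t} := by
  ext h
  simp [versionSpace, hist, List.range_succ, or_imp, forall_and, and_assoc]

open scoped Classical in
/-- If `ℋ` is nonempty and does not `γ`-shatter any measure tree of depth
`d+1` (with `γ ∈ (0,1]`), then there is a randomized online learner such that on every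
realizable stream: (i) at most `d` rounds have `μ̂_t(𝒴 \ S_t) ≥ γ`, and (ii) the expected
cumulative loss is at most `d + γT`. -/
theorem stmt5 {X Y : Type*} [MeasurableSpace Y]
    (𝒮 : Set (Set Y)) (h𝒮 : ∀ s ∈ 𝒮, MeasurableSet s)
    (H : Set (X → Y)) (hH : H.Nonempty)
    (γ : ℝ) (hγ0 : 0 < γ) (hγ1 : γ ≤ 1) (d : ℕ)
    (hshat : ¬ MSShatter 𝒮 H γ (d + 1)) :
    ∃ A : List (X × Set Y) → X → ProbabilityMeasure Y,
      ∀ (T : ℕ) (x : ℕ → X) (S : ℕ → Set Y),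
        (∀ t < T, S t ∈ 𝒮) →
        (∃ h ∈ H, ∀ t < T, h (x t) ∈ S t) →
        (((Finset.range T).filter fun t =>
            ENNReal.ofReal γ ≤ (A (hist x S t) (x t)).toMeasure ((S t)ᶜ)).card ≤ d) ∧
        (∑ t ∈ Finset.range T, (A (hist x S t) (x t)).toMeasure ((S t)ᶜ) ≤
          (d : ENNReal) + ENNReal.ofReal (γ * T)) := by
  rcases isEmpty_or_nonempty X with hX | ⟨⟨x₀⟩⟩
  · exact ⟨fun _ x => isEmptyElim x, fun _ x => isEmptyElim (x 0)⟩
  have : Nonempty Y := hH.elim fun h _ => ⟨h x₀⟩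
  choose A hA using fun l x => exists_good_measure 𝒮 γ (versionSpace H l) x
  refine ⟨A, fun T x S hS hreal => ?_⟩
  obtain ⟨h, hh, hc⟩ := hreal
  have hne : ∀ t ≤ T, h ∈ versionSpace H (hist x S t) := by
    intro t ht
    refine ⟨hh, fun p hp => ?_⟩
    obtain ⟨i, hi, rfl⟩ := List.mem_map.1 hp
    exact hc i ((List.mem_range.1 hi).trans_le ht)
  -- The potential: costly rounds so far plus the current rank never exceeds `d + 1`.
  have key : ∀ t ≤ T,
      (¬ RecShatter 𝒮 γ (shatterRank 𝒮 γ (versionSpace H (hist x S t)))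
        (versionSpace H (hist x S t))) ∧
      ((Finset.range t).filter fun t =>
        ENNReal.ofReal γ ≤ (A (hist x S t) (x t)).toMeasure ((S t)ᶜ)).card +
        shatterRank 𝒮 γ (versionSpace H (hist x S t)) ≤ d + 1 := by
    intro t
    induction t with
    | zero =>
      intro _
      have hV : versionSpace H (hist x S 0) = H := by simp [versionSpace, hist]
      have hn : ¬ RecShatter 𝒮 γ (d + 1) H := fun hr => hshat (hr.msShatter hγ0.ne')
      rw [hV]
      refine ⟨Nat.sInf_mem (s := {n | ¬ RecShatter 𝒮 γ n H}) ⟨_, hn⟩, ?_⟩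
      simpa [shatterRank] using Nat.sInf_le (s := {n | ¬ RecShatter 𝒮 γ n H}) hn
    | succ t ih =>
      intro ht
      obtain ⟨hr, hle⟩ := ih (by omega)
      rw [Finset.range_add_one, Finset.filter_insert, versionSpace_hist_succ]
      split_ifs with hbad
      · have hmass : (A (hist x S t) (x t)).toMeasure (S t) ≤ 1 - ENNReal.ofReal γ := by
          have hms := h𝒮 _ (hS t ht)
          rw [← compl_compl (S t), prob_compl_eq_one_sub hms.compl]
          exact tsub_le_tsub_left hbad 1
        obtain ⟨h1, h2⟩ := hA (hist x S t) (x t) ⟨h, hne t (by omega)⟩ ⟨_, hr⟩ (S t) (hS t ht)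
          hmass
        refine ⟨h1, ?_⟩
        rw [Finset.card_insert_of_notMem (by simp)]
        omega
      · have hn : ¬ RecShatter 𝒮 γ (shatterRank 𝒮 γ (versionSpace H (hist x S t)))
            {h ∈ versionSpace H (hist x S t) | h (x t) ∈ S t} :=
          fun h' => hr (h'.mono fun _ hg => hg.1)
        exact ⟨Nat.sInf_mem (s := {n | ¬ RecShatter 𝒮 γ n _}) ⟨_, hn⟩,
          (Nat.add_le_add_left (Nat.sInf_le hn) _).trans hle⟩
  have hcard : ((Finset.range T).filter fun t =>
      ENNReal.ofReal γ ≤ (A (hist x S t) (x t)).toMeasure ((S t)ᶜ)).card ≤ d := by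
    obtain ⟨hr, hle⟩ := key T le_rfl
    -- The target hypothesis keeps the version space nonempty, so its rank is positive.
    have hpos : shatterRank 𝒮 γ (versionSpace H (hist x S T)) ≠ 0 := fun h0 => by
      rw [h0] at hr
      exact hr ⟨h, hne T le_rfl⟩
    omega
  refine ⟨hcard, ?_⟩
  calc ∑ t ∈ Finset.range T, (A (hist x S t) (x t)).toMeasure ((S t)ᶜ)
      ≤ ∑ t ∈ Finset.range T, ((if ENNReal.ofReal γ ≤
          (A (hist x S t) (x t)).toMeasure ((S t)ᶜ) then 1 else 0) + ENNReal.ofReal γ) := by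
        refine Finset.sum_le_sum fun t _ => ?_
        split_ifs with hb
        · exact prob_le_one.trans le_self_add
        · rw [zero_add]
          exact (not_le.1 hb).le
    _ = (((Finset.range T).filter fun t => ENNReal.ofReal γ ≤
          (A (hist x S t) (x t)).toMeasure ((S t)ᶜ)).card : ENNReal) +
          ENNReal.ofReal (γ * T) := by
        rw [Finset.sum_add_distrib, Finset.sum_boole, Finset.sum_const, Finset.card_range,
          ENNReal.ofReal_mul hγ0.le, ENNReal.ofReal_natCast, nsmul_eq_mul, mul_comm]
    _ ≤ _ := by gcongr
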